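/- Let n ≥ 2 and let μ ∈ ℤⁿ be weakly decreasing with depth(μ) < 2. Let x = (w, λ) with w ∈ Sₙ and λ ∈ ℤⁿ be μ-permissible and suppose that ℓ(x, e_a − e_b) ≤ 0 for all 1 ≤ a < b ≤ n (i.e. x has minimal length in its right coset modulo the finite Weyl group, so that x lies in Adm(μ)^K for K hyperspecial). Then x is of positive Coxeter type: there exists a permutation v ∈ Sₙ that is length positive for x such that v⁻¹ w v is a product of pairwise distinct simple transpositions. -/

import Mathlib

/-- The simple transposition of `Fin n` swapping the 0-indexed positions `i` and
`i+1` (the identity if `i + 1 ≥ n`). -/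
def simpleT (n : ℕ) (i : ℕ) : Equiv.Perm (Fin n) :=
  if h : i + 1 < n then Equiv.swap ⟨i, by omega⟩ ⟨i + 1, h⟩ else 1

/-- Sum of the first `j` entries of a vector indexed by `Fin n`. -/
def psum {n : ℕ} (μ : Fin n → ℤ) (j : ℕ) : ℤ :=
  ∑ i ∈ Finset.univ.filter (fun i : Fin n => (i : ℕ) < j), μ i

/-- The depth of a weakly decreasing vector `μ ∈ ℤⁿ`, viewed as a dominant
cocharacter of `GL_n`:  `max_{1 ≤ j ≤ n-1} (μ₁+⋯+μⱼ) − (j/n)(μ₁+⋯+μₙ)`. -/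
def depth {n : ℕ} (μ : Fin n → ℤ) : ℚ :=
  if h : (Finset.Icc 1 (n - 1)).Nonempty then
    (Finset.Icc 1 (n - 1)).sup' h fun j : ℕ =>
      (psum μ j : ℚ) - (j : ℚ) / (n : ℚ) * (psum μ n : ℚ)
  else 0

/-- The length functional of `x = (w, λ)`: the value `ℓ(x, e_a − e_b)`. -/
def ellF {n : ℕ} (w : Equiv.Perm (Fin n)) (lam : Fin n → ℤ) (a b : Fin n) : ℤ :=
  lam a - lam b +
    (if a < b ∧ w b < w a then 1 else if b < a ∧ w a < w b then -1 else 0)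

/-- The vector `μ^{(i)}(x) = λ + 1_{[1..i]} − w⁻¹·1_{[1..i]}` for `x = (w, λ)`. -/
def muI {n : ℕ} (w : Equiv.Perm (Fin n)) (lam : Fin n → ℤ) (i : ℕ) : Fin n → ℤ :=
  fun a => lam a + (if (a : ℕ) < i then 1 else 0) - (if ((w a : Fin n) : ℕ) < i then 1 else 0)

/-- `x = (w, λ)` is `μ`-permissible: the entries of `λ` sum to those of `μ`, and
for every `i ∈ {1,…,n}` the weakly decreasing rearrangement `ρ` of `μ^{(i)}(x)`
satisfies `ρ₁+⋯+ρⱼ ≤ μ₁+⋯+μⱼ` for all `j`. -/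
def Permissible {n : ℕ} (μ : Fin n → ℤ) (w : Equiv.Perm (Fin n)) (lam : Fin n → ℤ) : Prop :=
  (∑ a, lam a = ∑ a, μ a) ∧
  ∀ i : ℕ, 1 ≤ i → i ≤ n →
    ∀ (ρ : Fin n → ℤ) (π : Equiv.Perm (Fin n)),
      (∀ a, ρ a = muI w lam i (π a)) → Antitone ρ →
      ∀ j : ℕ, psum ρ j ≤ psum μ j

/-
Minimality in the coset makes `lam` weakly increasing, and permissibility (at `i = n`) bounds its
depth by that of `μ`. Subtracting a constant, and dualizing by `lam ↦ 1 - lam ∘ Fin.rev` and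
conjugation of `w` by `Fin.revPerm`, one may assume that the sum of the entries of `lam` lies
between `0` and `n / 2`. Depth less than 2 then leaves the vectors `(c, 0, …, 0, *)` and
`(c, 0, …, 0, 1, 1)` with `c ≥ -1`, and `(c, 0, …, 0, 1, 1, 1)` for five pairs `(n, c)`.

A length positive `v` is an enumeration of the indices, and it conjugates `w` to a partial Coxeter
element if it lists the cycles of `w` one after the other, each of them unimodally: one part
backwards, then the rest forwards. In the two infinite families minimality makes `w` almost
monotone, and the cycles can be ordered so that length positivity holds, with at most one of them
not simply listed forwards. The five sporadic vectors are settled by a finite search.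
-/

open Equiv

theorem eq_map_drop_finRange_of_cons {n k : ℕ} {α : Type*} {f : Fin n → α}
    {a : α} {L : List α}
    (h : a :: L = ((List.finRange n).drop k).map f) :
    ∃ hk : k < n, a = f ⟨k, hk⟩ ∧ L = ((List.finRange n).drop (k + 1)).map f := by
  have hk : k < n := by
    have := congrArg List.length h
    simp only [List.length_cons, List.length_map, List.length_drop, List.length_finRange] at this
    omega
  rw [List.drop_eq_getElem_cons (by simpa using hk), List.map_cons, List.cons.injEq] at h
  exact ⟨hk, by simpa using h.1, h.2⟩

theorem conj_swap_eq_simpleT {n k : ℕ} {v : Perm (Fin n)} {a b : Fin n} {L : List (Fin n)}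
    (h : a :: b :: L = ((List.finRange n).drop k).map v) :
    k + 1 < n ∧ v⁻¹ * swap a b * v = simpleT n k := by
  obtain ⟨hk, rfl, hL⟩ := eq_map_drop_finRange_of_cons h
  obtain ⟨hk', rfl, -⟩ := eq_map_drop_finRange_of_cons hL
  refine ⟨hk', ?_⟩
  rw [simpleT, dif_pos hk', mul_assoc, swap_mul_eq_mul_swap, inv_mul_cancel_left]
  simp only [Perm.inv_def, symm_apply_apply]

section PartialCoxeter

variable {α : Type*} [DecidableEq α]

/-- `IsPartialCoxeter L u` says that `u` is the product, in some order, of the swaps of some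
pairs of neighbouring entries of `L`. When `L` lists `v 0, v 1, …` for a permutation `v`, these
are the conjugates by `v` of the partial Coxeter elements of the symmetric group. -/
inductive IsPartialCoxeter : List α → Perm α → Prop
  | nil : IsPartialCoxeter [] 1
  | cons (a : α) {L : List α} {u : Perm α} (h : IsPartialCoxeter L u) :
      IsPartialCoxeter (a :: L) u
  | mulLeft (a b : α) {L : List α} {u : Perm α} (h : IsPartialCoxeter (b :: L) u) :
      IsPartialCoxeter (a :: b :: L) (swap a b * u)
  | mulRight (a b : α) {L : List α} {u : Perm α} (h : IsPartialCoxeter (b :: L) u) :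
      IsPartialCoxeter (a :: b :: L) (u * swap a b)

namespace IsPartialCoxeter

variable {A B L : List α} {u v : Perm α} {x : α}

theorem apply_of_notMem (h : IsPartialCoxeter L u) (hx : x ∉ L) : u x = x := by
  induction h with
  | nil => rfl
  | cons a _ ih => exact ih (List.not_mem_of_not_mem_cons hx)
  | mulLeft a b _ ih =>
    obtain ⟨hxa, hxL⟩ := not_or.1 (List.mem_cons.not.1 hx)
    rw [Perm.mul_apply, ih hxL, swap_apply_of_ne_of_ne hxa (List.ne_of_not_mem_cons hxL)]
  | mulRight a b _ ih =>
    obtain ⟨hxa, hxL⟩ := not_or.1 (List.mem_cons.not.1 hx)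
    rw [Perm.mul_apply, swap_apply_of_ne_of_ne hxa (List.ne_of_not_mem_cons hxL), ih hxL]

theorem apply_mem (h : IsPartialCoxeter L u) (hx : x ∈ L) : u x ∈ L := by
  by_contra hux
  exact hux ((u.injective (h.apply_of_notMem hux)).symm ▸ hx)

theorem append (hA : IsPartialCoxeter A u) (hB : IsPartialCoxeter B v) (h : A.Disjoint B) :
    IsPartialCoxeter (A ++ B) (u * v) := by
  induction hA with
  | nil => simpa only [one_mul, List.nil_append] using hB
  | cons a _ ih => exact .cons a (ih (List.disjoint_of_disjoint_cons_left h))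
  | mulLeft a b _ ih =>
    rw [mul_assoc]
    exact .mulLeft a b (ih (List.disjoint_of_disjoint_cons_left h))
  | @mulRight a b L u _ ih =>
    have hv : swap a b * v = v * swap a b := by
      rw [mul_swap_eq_swap_mul, hB.apply_of_notMem (h (by simp)), hB.apply_of_notMem (h (by simp))]
    rw [mul_assoc, hv, ← mul_assoc]
    exact .mulRight a b (ih (List.disjoint_of_disjoint_cons_left h))

theorem formPerm : ∀ L : List α, IsPartialCoxeter L L.formPerm
  | [] => .nil
  | [a] => by simpa only [List.formPerm_singleton] using .cons a .nil
  | a :: b :: L => by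
    rw [List.formPerm_cons_cons]
    exact .mulLeft a b (formPerm (b :: L))

theorem formPerm_append_reverse (A : List α) : ∀ B : List α, (B ++ A).Nodup →
    IsPartialCoxeter (B ++ A) (A ++ B.reverse).formPerm
  | [], _ => by simpa only [List.reverse_nil, List.append_nil, List.nil_append] using formPerm A
  | [b], h => by
    rw [List.reverse_singleton,
      ← List.formPerm_eq_of_isRotated h List.isRotated_append]
    exact formPerm ([b] ++ A)
  | b :: c :: B, h => by
    have ih := formPerm_append_reverse A (c :: B) h.of_cons
    have hprod : (A ++ (b :: c :: B).reverse).formPerm =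
        (A ++ (c :: B).reverse).formPerm * swap b c := by
      simp only [List.reverse_cons, List.append_assoc, List.cons_append, List.nil_append]
      rw [← List.append_assoc, List.formPerm_append_pair, swap_comm, List.append_assoc]
    rw [hprod]
    exact .mulRight b c ih

theorem exists_prod_simpleT {n : ℕ} {v u : Perm (Fin n)} {L : List (Fin n)}
    (h : IsPartialCoxeter L u) {k : ℕ} (hL : L = ((List.finRange n).drop k).map v) :
    ∃ l : List ℕ, l.Nodup ∧ (∀ i ∈ l, k ≤ i ∧ i + 1 < n) ∧
      v⁻¹ * u * v = (l.map (simpleT n)).prod := by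
  induction h generalizing k with
  | nil => exact ⟨[], List.nodup_nil, by simp, by simp⟩
  | cons a _ ih =>
    obtain ⟨l, hl, hlk, hprod⟩ := ih (eq_map_drop_finRange_of_cons hL).2.2
    exact ⟨l, hl, fun i hi => ⟨(Nat.le_succ k).trans (hlk i hi).1, (hlk i hi).2⟩, hprod⟩
  | @mulLeft a b L u _ ih =>
    obtain ⟨hk, hswap⟩ := conj_swap_eq_simpleT hL
    obtain ⟨l, hl, hlk, hprod⟩ := ih (eq_map_drop_finRange_of_cons hL).2.2
    refine ⟨k :: l, List.nodup_cons.2 ⟨fun hkl => absurd (hlk k hkl).1 (by omega), hl⟩, ?_, ?_⟩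
    · simp only [List.forall_mem_cons]
      exact ⟨⟨le_rfl, hk⟩, fun i hi => ⟨(Nat.le_succ k).trans (hlk i hi).1, (hlk i hi).2⟩⟩
    · rw [List.map_cons, List.prod_cons, ← hprod, ← hswap]
      group
  | @mulRight a b L u _ ih =>
    obtain ⟨hk, hswap⟩ := conj_swap_eq_simpleT hL
    obtain ⟨l, hl, hlk, hprod⟩ := ih (eq_map_drop_finRange_of_cons hL).2.2
    refine ⟨l.concat k, hl.concat fun hkl => absurd (hlk k hkl).1 (by omega), ?_, ?_⟩
    · simp only [List.concat_eq_append, List.forall_mem_append, List.forall_mem_singleton]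
      exact ⟨fun i hi => ⟨(Nat.le_succ k).trans (hlk i hi).1, (hlk i hi).2⟩, le_rfl, hk⟩
    · rw [List.concat_eq_append, List.map_append, List.prod_append, List.map_singleton,
        List.prod_singleton, ← hprod, ← hswap]
      group

end IsPartialCoxeter

/-- `IsCoxeterBlock w L` says that `L` lists, without repetition, a `w`-stable set on which `w` is
a partial Coxeter element for the order in which `L` enumerates it. -/
def IsCoxeterBlock (w : Perm α) (L : List α) : Prop :=
  L.Nodup ∧ ∃ u, IsPartialCoxeter L u ∧ ∀ x ∈ L, u x = w x

theorem IsCoxeterBlock.append {w : Perm α} {A B : List α} (hA : IsCoxeterBlock w A)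
    (hB : IsCoxeterBlock w B) (h : A.Disjoint B) : IsCoxeterBlock w (A ++ B) := by
  obtain ⟨hAn, u, hu, huw⟩ := hA
  obtain ⟨hBn, v, hv, hvw⟩ := hB
  refine ⟨hAn.append hBn h, u * v, hu.append hv h, fun x hx => ?_⟩
  rw [Perm.mul_apply]
  rcases List.mem_append.1 hx with hx | hx
  · rw [hv.apply_of_notMem (h hx), huw x hx]
  · rw [hu.apply_of_notMem fun hA => h hA (hv.apply_mem hx), hvw x hx]

end PartialCoxeter

theorem iff_of_sameCycle {α : Type*} [Finite α] {w : Perm α} {P : α → Prop}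
    (hP : ∀ x, P (w x) ↔ P x) {x y : α} (h : w.SameCycle x y) : P x ↔ P y := by
  obtain ⟨k, rfl⟩ := h.exists_nat_pow_eq
  induction k with
  | zero => rfl
  | succ k ih => rw [pow_succ', Perm.mul_apply, hP, ih (Perm.sameCycle_pow_right.2 (.refl w x))]

section CycleList

variable {α : Type*} [DecidableEq α] {w : Perm α}

/-- `IsCycleList w C` says that the nonempty list `C` is a cycle of `w` (possibly a fixed point)
in cycle notation. -/
structure IsCycleList (w : Perm α) (C : List α) : Prop where
  nodup : C.Nodup
  formPerm_apply : ∀ x ∈ C, C.formPerm x = w x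

namespace IsCycleList

variable {A B C C' : List α}

theorem of_isRotated (h : IsCycleList w C) (hC : C ~r C') : IsCycleList w C' where
  nodup := hC.nodup_iff.1 h.nodup
  formPerm_apply x hx := by
    rw [← List.formPerm_eq_of_isRotated h.nodup hC, h.formPerm_apply x (hC.mem_iff.2 hx)]

theorem isCoxeterBlock (h : IsCycleList w (A ++ B.reverse)) : IsCoxeterBlock w (B ++ A) := by
  have hperm : (A ++ B.reverse).Perm (B ++ A) :=
    List.perm_append_comm.trans ((List.reverse_perm B).append_right A)
  exact ⟨hperm.nodup_iff.1 h.nodup, _,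
    .formPerm_append_reverse A B (hperm.nodup_iff.1 h.nodup),
    fun x hx => h.formPerm_apply x (hperm.mem_iff.2 hx)⟩

theorem isCoxeterBlock_self (h : IsCycleList w C) : IsCoxeterBlock w C :=
  isCoxeterBlock (B := []) (by simpa only [List.reverse_nil, List.append_nil] using h)

theorem isChain (h : IsCycleList w C) : C.IsChain fun a b => w a = b :=
  List.isChain_iff_getElem.2 fun i hi => by
    rw [← h.formPerm_apply _ (List.getElem_mem _), List.formPerm_apply_lt_getElem _ h.nodup i hi]

theorem pairwise_tail {z : α} {T : List α} (h : IsCycleList w (z :: T)) {D : α → Prop}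
    (hD : ∀ a, a ≠ z → D a → D (w a)) : T.Pairwise fun a b => D a → D b := by
  have : Trans (fun a b => D a → D b) (fun a b => D a → D b) (fun a b => D a → D b) :=
    ⟨fun hab hbc ha => hbc (hab ha)⟩
  refine (h.isChain.tail.imp_of_mem_imp fun a b ha _ hab => ?_).pairwise
  exact fun haD => hab ▸ hD a (fun haz => (List.nodup_cons.1 h.nodup).1 (haz ▸ ha)) haD

end IsCycleList

variable [Finite α]

theorem exists_isCycleList (w : Perm α) (z : α) :
    ∃ T, IsCycleList w (z :: T) ∧ ∀ x, x ∈ z :: T ↔ w.SameCycle z x := by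
  have := Fintype.ofFinite α
  by_cases hz : z ∈ w.support
  · obtain ⟨T, hT⟩ : ∃ T, w.toList z = z :: T := by
      have hpos := Perm.length_toList_pos_of_mem_support w z hz
      obtain ⟨a, T, hT⟩ := List.exists_cons_of_length_pos hpos
      have := Perm.toList_getElem_zero w z hz
      simp only [hT, List.getElem_cons_zero] at this
      exact ⟨T, this ▸ hT⟩
    have hmem (x) : x ∈ z :: T ↔ w.SameCycle z x := by
      rw [← hT, Perm.mem_toList_iff, and_iff_left hz]
    refine ⟨T, ⟨hT ▸ Perm.nodup_toList w z, fun x hx => ?_⟩, hmem⟩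
    rw [← hT, Perm.formPerm_toList, ((hmem x).1 hx).cycleOf_apply]
  · rw [Perm.notMem_support] at hz
    refine ⟨[], ⟨List.nodup_singleton z, by simp [hz]⟩, fun x => ?_⟩
    rw [List.mem_singleton]
    exact ⟨fun hx => hx ▸ .refl w z, fun hx => (hx.eq_of_left hz).symm⟩

theorem exists_isCoxeterBlock {P : α → Prop} (hP : ∀ x, P (w x) ↔ P x) :
    ∃ R, IsCoxeterBlock w R ∧ ∀ x, x ∈ R ↔ P x := by
  classical
  have := Fintype.ofFinite α
  suffices ∀ s : Finset α, (∀ x, w x ∈ s ↔ x ∈ s) →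
      ∃ R, IsCoxeterBlock w R ∧ ∀ x, x ∈ R ↔ x ∈ s by
    obtain ⟨R, hR, hRP⟩ := this (Finset.univ.filter P) (by simpa using hP)
    exact ⟨R, hR, by simpa using hRP⟩
  intro s
  induction s using Finset.strongInduction with
  | H s ih =>
    intro hs
    rcases s.eq_empty_or_nonempty with rfl | ⟨z, hz⟩
    · exact ⟨[], ⟨List.nodup_nil, 1, .nil, by simp⟩, by simp⟩
    obtain ⟨T, hT, hmem⟩ := exists_isCycleList w z
    have hsub {x} (hx : w.SameCycle z x) : x ∈ s := (iff_of_sameCycle hs hx).1 hz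
    obtain ⟨R, hR, hRmem⟩ := ih (s.filter fun x => ¬ w.SameCycle z x)
      (Finset.filter_ssubset.2 ⟨z, hz, not_not.2 (.refl w z)⟩)
      (fun x => by simp only [Finset.mem_filter, hs, Perm.sameCycle_apply_right])
    refine ⟨R ++ z :: T, hR.append hT.isCoxeterBlock_self fun x hxR hxT => ?_, fun x => ?_⟩
    · exact (Finset.mem_filter.1 ((hRmem x).1 hxR)).2 ((hmem x).1 hxT)
    · rw [List.mem_append, hRmem, hmem, Finset.mem_filter]
      tauto

end CycleList

section Ordering

variable {α : Type*} {w : Perm α} {y z t : α} {D S : α → Prop}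

/-- The relation "`a` may stand before `b`" for enumerations of `α` that start with `y` and in which
no element of `D` precedes `t` and no element of `S` follows `z`. In the infinite families of
vectors `lam`, where `z = 0` and `y` is the last index, it implies length positivity. -/
def MayPrecede (y z t : α) (D S : α → Prop) (a b : α) : Prop :=
  b ≠ y ∧ (D a → b ≠ t) ∧ (a = z → ¬ S b)

theorem pairwise_mayPrecede {M R : List α} (hn : (y :: (M ++ z :: R)).Nodup) (hz : D z)
    (ht : ¬ D t) (hM : (y :: M).Pairwise fun a b => D a → D b) (hR : ∀ b ∈ R, b ≠ t ∧ ¬ S b) :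
    (y :: (M ++ z :: R)).Pairwise (MayPrecede y z t D S) := by
  have htz : z ≠ t := fun h => ht (h ▸ hz)
  obtain ⟨hy, hMz⟩ := List.nodup_cons.1 hn
  have hz_notMem : ∀ a ∈ y :: M, a ≠ z := by
    rw [← List.cons_append] at hn
    exact fun a ha haz => (List.disjoint_of_nodup_append hn) ha (haz ▸ List.mem_cons_self)
  have hfirst : (y :: (M ++ z :: R)).Pairwise fun _ b => b ≠ y :=
    List.pairwise_cons.2 ⟨fun b hb hby => hy (hby ▸ hb),
      List.pairwise_of_forall_mem_list fun a _ b hb hby => hy (hby ▸ hb)⟩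
  have hrest : ((y :: M) ++ z :: R).Pairwise fun a b => (D a → b ≠ t) ∧ (a = z → ¬ S b) := by
    refine List.pairwise_append.2 ⟨?_, ?_, fun a ha b hb => ⟨fun _ => ?_, fun haz => ?_⟩⟩
    · exact hM.imp_of_mem fun ha _ hab =>
        ⟨fun haD hbt => ht (hbt ▸ hab haD), fun haz => absurd haz (hz_notMem _ ha)⟩
    · exact List.pairwise_cons.2 ⟨fun b hb => ⟨fun _ => (hR b hb).1, fun _ => (hR b hb).2⟩,
        List.pairwise_of_forall_mem_list fun _ _ b hb =>
          ⟨fun _ => (hR b hb).1, fun _ => (hR b hb).2⟩⟩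
    · rcases List.mem_cons.1 hb with rfl | hb
      exacts [htz, (hR b hb).1]
    · exact absurd haz (hz_notMem a ha)
  exact hfirst.and hrest

variable [DecidableEq α] [Finite α]

theorem exists_isCoxeterBlock_cons {P : α → Prop} (hP : ∀ x, P (w x) ↔ P x) (hy : P y) :
    ∃ R, IsCoxeterBlock w (y :: R) ∧ ∀ x, x ∈ y :: R ↔ P x := by
  obtain ⟨T, hT, hTmem⟩ := exists_isCycleList w y
  obtain ⟨R, hR, hRmem⟩ := exists_isCoxeterBlock (w := w)
    (P := fun x => P x ∧ ¬ w.SameCycle y x) fun x => by rw [hP, Perm.sameCycle_apply_right]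
  refine ⟨T ++ R, ?_, fun x => ?_⟩
  · exact hT.isCoxeterBlock_self.append hR fun x hxT hxR =>
      ((hRmem x).1 hxR).2 ((hTmem x).1 hxT)
  · rw [← List.cons_append, List.mem_append, hTmem, hRmem]
    have := fun h : w.SameCycle y x => (iff_of_sameCycle hP h).1 hy
    tauto

theorem exists_isCoxeterBlock_concat {P : α → Prop} (hP : ∀ x, P (w x) ↔ P x) (hz : P z) :
    ∃ R, IsCoxeterBlock w (R ++ [z]) ∧ ∀ x, x ∈ R ++ [z] ↔ P x := by
  obtain ⟨T, hT, hTmem⟩ := exists_isCycleList w z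
  obtain ⟨R, hR, hRmem⟩ := exists_isCoxeterBlock (w := w)
    (P := fun x => P x ∧ ¬ w.SameCycle z x) fun x => by rw [hP, Perm.sameCycle_apply_right]
  have hrot : z :: T ~r T ++ [z] := List.isRotated_append (l := [z])
  refine ⟨R ++ T, ?_, fun x => ?_⟩
  · rw [List.append_assoc]
    exact hR.append (hT.of_isRotated hrot).isCoxeterBlock_self fun x hxR hxT =>
      ((hRmem x).1 hxR).2 ((hTmem x).1 (hrot.mem_iff.2 hxT))
  · rw [List.append_assoc, List.mem_append, ← hrot.mem_iff, hTmem, hRmem]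
    have := fun h : w.SameCycle z x => (iff_of_sameCycle hP h).1 hz
    tauto

theorem exists_mayPrecede_of_stable (hy : ¬ D y) (hz : D z) (ht : ¬ D t)
    (hD : ∀ x, D (w x) ↔ D x) :
    ∃ L, IsCoxeterBlock w L ∧ (∀ x, x ∈ L) ∧ L.Pairwise (MayPrecede y z t D S) := by
  obtain ⟨M₁, hM₁, hmem₁⟩ := exists_isCoxeterBlock_cons (P := fun x => ¬ D x)
    (fun x => not_congr (hD x)) hy
  obtain ⟨M₂, hM₂, hmem₂⟩ := exists_isCoxeterBlock_concat hD hz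
  have hblock := hM₁.append hM₂ fun x h₁ h₂ => (hmem₁ x).1 h₁ ((hmem₂ x).1 h₂)
  rw [← List.append_assoc] at hblock
  refine ⟨_, hblock, fun x => ?_, pairwise_mayPrecede (M := M₁ ++ M₂) hblock.1 hz ht ?_ (by simp)⟩
  · rw [List.append_assoc, List.mem_append, hmem₁, hmem₂]
    exact (em (D x)).symm
  · rw [← List.cons_append]
    refine List.pairwise_append.2 ⟨?_, ?_, ?_⟩
    · exact List.pairwise_of_forall_mem_list fun a ha _ _ haD => absurd haD ((hmem₁ a).1 ha)
    · exact List.pairwise_of_forall_mem_list fun _ _ b hb _ =>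
        (hmem₂ b).1 (List.mem_append_left _ hb)
    · exact fun a ha _ _ haD => absurd haD ((hmem₁ a).1 ha)

theorem exists_mayPrecede_of_not_sameCycle (hz : D z) (ht : ¬ D t)
    (hD : ∀ x, x ≠ z → D x → D (w x)) (hDz : ∀ x, D x → w.SameCycle z x)
    (hyz : ¬ w.SameCycle z y) :
    ∃ L, IsCoxeterBlock w L ∧ (∀ x, x ∈ L) ∧ L.Pairwise (MayPrecede y z t D S) := by
  obtain ⟨M, hM, hMmem⟩ := exists_isCoxeterBlock_cons (w := w)
    (P := fun x => ¬ w.SameCycle z x) (fun x => by rw [Perm.sameCycle_apply_right]) hyz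
  obtain ⟨T, hT, hTmem⟩ := exists_isCycleList w z
  have hrot : z :: T ~r T ++ [z] := List.isRotated_append (l := [z])
  have hMD (a) (ha : a ∈ y :: M) : ¬ D a := fun haD => (hMmem a).1 ha (hDz a haD)
  have hblock := hM.append (hT.of_isRotated hrot).isCoxeterBlock_self fun x hxM hxT =>
    (hMmem x).1 hxM ((hTmem x).1 (hrot.mem_iff.2 hxT))
  rw [← List.append_assoc] at hblock
  refine ⟨_, hblock, fun x => ?_, pairwise_mayPrecede (M := M ++ T) hblock.1 hz ht ?_ (by simp)⟩
  · rw [List.append_assoc, List.mem_append, hMmem, ← hrot.mem_iff, hTmem]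
    exact (em _).symm
  · rw [← List.cons_append]
    exact List.pairwise_append.2
      ⟨List.pairwise_of_forall_mem_list fun a ha _ _ haD => absurd haD (hMD a ha),
        hT.pairwise_tail hD, fun a ha _ _ haD => absurd haD (hMD a ha)⟩

-- The cycle of `z` is written unimodally: it is traversed backwards from `y` and then forwards up
-- to `z`, so that the elements of `D`, all of which come after `y` in the cycle, stay together.
theorem exists_mayPrecede_of_sameCycle (hy : ¬ D y) (hz : D z) (ht : ¬ D t)
    (hD : ∀ x, x ≠ z → D x → D (w x)) (hyz : w.SameCycle z y) (htz : w.SameCycle z t)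
    (hS : ∀ x, S x → w.SameCycle z x) :
    ∃ L, IsCoxeterBlock w L ∧ (∀ x, x ∈ L) ∧ L.Pairwise (MayPrecede y z t D S) := by
  obtain ⟨T, hT, hTmem⟩ := exists_isCycleList w z
  obtain ⟨R, hR, hRmem⟩ := exists_isCoxeterBlock (w := w)
    (P := fun x => ¬ w.SameCycle z x) fun x => by rw [Perm.sameCycle_apply_right]
  have hTD := hT.pairwise_tail hD
  have hyT : y ∈ T :=
    (List.mem_cons.1 ((hTmem y).2 hyz)).resolve_left fun hyz => hy (hyz ▸ hz)
  obtain ⟨B, A, rfl⟩ := List.append_of_mem hyT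
  obtain ⟨-, hAD, hBD⟩ := List.pairwise_append.1 hTD
  have hBy (a) (ha : a ∈ y :: B.reverse) : ¬ D a := by
    rcases List.mem_cons.1 ha with rfl | ha
    exacts [hy, fun haD => hy (hBD a (List.mem_reverse.1 ha) y List.mem_cons_self haD)]
  have hcycle : IsCoxeterBlock w ((y :: B.reverse) ++ (A ++ [z])) := by
    refine IsCycleList.isCoxeterBlock (hT.of_isRotated ?_)
    simpa using List.isRotated_append (l := z :: (B ++ [y])) (l' := A)
  have hmem (x) : x ∈ (y :: B.reverse) ++ (A ++ [z]) ↔ w.SameCycle z x := by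
    rw [← hTmem]
    simp only [List.mem_append, List.mem_cons, List.mem_reverse, List.not_mem_nil]
    tauto
  have hblock := hcycle.append hR fun x hx hxR => (hRmem x).1 hxR ((hmem x).1 hx)
  have hall (x) : x ∈ (y :: B.reverse) ++ (A ++ [z]) ++ R := by
    rw [List.mem_append, hmem, hRmem]
    exact em _
  have hL : (y :: B.reverse) ++ (A ++ [z]) ++ R = y :: ((B.reverse ++ A) ++ z :: R) := by simp
  rw [hL] at hblock hall
  refine ⟨_, hblock, hall, pairwise_mayPrecede hblock.1 hz ht ?_ fun b hb => ?_⟩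
  · rw [← List.cons_append]
    exact List.pairwise_append.2
      ⟨List.pairwise_of_forall_mem_list fun a ha _ _ haD => absurd haD (hBy a ha), hAD.of_cons,
        fun a ha _ _ haD => absurd haD (hBy a ha)⟩
  · exact ⟨fun hbt => (hRmem b).1 hb (hbt ▸ htz), fun hbS => (hRmem b).1 hb (hS b hbS)⟩

end Ordering

section LengthFunctional

variable {n : ℕ} {w : Perm (Fin n)} {lam : Fin n → ℤ}

/-- `x = (w, λ)` has minimal length in its right coset modulo the finite Weyl group. -/
def IsCosetMinimal (w : Perm (Fin n)) (lam : Fin n → ℤ) : Prop :=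
  ∀ a b : Fin n, a < b → ellF w lam a b ≤ 0

/-- `x = (w, λ)` is of positive Coxeter type: some length positive `v` conjugates `w` to a partial
Coxeter element. -/
def IsPositiveCoxeter (w : Perm (Fin n)) (lam : Fin n → ℤ) : Prop :=
  ∃ v : Perm (Fin n), (∀ a b : Fin n, a < b → 0 ≤ ellF w lam (v a) (v b)) ∧
    ∃ l : List ℕ, l.Nodup ∧ (∀ i ∈ l, i + 1 < n) ∧ v⁻¹ * w * v = (l.map (simpleT n)).prod

theorem ellF_of_lt {a b : Fin n} (h : a < b) :
    ellF w lam a b = lam a - lam b + if w b < w a then 1 else 0 := by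
  simp only [ellF, h, h.not_gt, true_and, false_and, if_false]

theorem ellF_antisymm (a b : Fin n) : ellF w lam b a = -ellF w lam a b := by
  rcases lt_trichotomy a b with h | rfl | h
  · simp only [ellF, h, h.not_gt, true_and, false_and, if_false]
    split_ifs <;> ring
  · simp [ellF]
  · simp only [ellF, h, h.not_gt, true_and, false_and, if_false]
    split_ifs <;> ring

namespace IsCosetMinimal

theorem monotone (h : IsCosetMinimal w lam) : Monotone lam :=
  monotone_iff_forall_lt.2 fun a b hab => by
    have := h a b hab
    rw [ellF_of_lt hab] at this
    split_ifs at this <;> omega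

theorem apply_lt (h : IsCosetMinimal w lam) {a b : Fin n} (hab : a < b) (hlam : lam a = lam b) :
    w a < w b := by
  have := h a b hab
  rw [ellF_of_lt hab, hlam, sub_self, zero_add] at this
  refine lt_of_le_of_ne (not_lt.1 fun hba => ?_) (w.injective.ne hab.ne)
  rw [if_pos hba] at this
  omega

theorem ellF_nonneg (h : IsCosetMinimal w lam) {a b : Fin n}
    (hab : a < b → lam b - lam a ≤ if w b < w a then 1 else 0) : 0 ≤ ellF w lam a b := by
  rcases lt_trichotomy a b with hlt | rfl | hlt
  · have := hab hlt
    rw [ellF_of_lt hlt]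
    omega
  · simp [ellF]
  · rw [ellF_antisymm b a]
    exact neg_nonneg.2 (h b a hlt)

end IsCosetMinimal

theorem IsCoxeterBlock.isPositiveCoxeter {L : List (Fin n)} (h : IsCoxeterBlock w L)
    (hmem : ∀ x, x ∈ L) (hL : L.Pairwise fun a b => 0 ≤ ellF w lam a b) :
    IsPositiveCoxeter w lam := by
  obtain ⟨hn, u, hu, huw⟩ := h
  obtain rfl : u = w := Equiv.ext fun x => huw x (hmem x)
  have hlen : L.length = n := by
    simpa using Fintype.card_congr (hn.getEquivOfForallMemList L hmem)
  let v : Perm (Fin n) := (finCongr hlen.symm).trans (hn.getEquivOfForallMemList L hmem)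
  have hv : L = (List.finRange n).map v :=
    List.ext_getElem (by simp [hlen]) fun i _ _ => by simp [v]
  obtain ⟨l, hl, hln, hprod⟩ := hu.exists_prod_simpleT (k := 0) hv
  refine ⟨v, fun a b hab => ?_, l, hl, fun i hi => (hln i hi).2, hprod⟩
  rw [hv, ← List.ofFn_eq_map] at hL
  exact List.pairwise_ofFn.1 hL hab

end LengthFunctional

section Family

variable {N : ℕ} {w : Perm (Fin (N + 1))} {t : Fin (N + 1)}

theorem val_le_card_of_forall_lt_mem {n : ℕ} (w : Perm (Fin n)) {q : Fin n} {s : Finset (Fin n)}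
    (h : ∀ x, w x < q → x ∈ s) : (q : ℕ) ≤ s.card := by
  rw [← Fin.card_Iio q, ← Finset.card_map w.symm.toEmbedding]
  refine Finset.card_le_card fun x hx => h x ?_
  simpa [Finset.mem_map_equiv] using hx

/-- `IsFamilyPerm w t` collects what minimality says about `w` when the entries of `λ` at
`0 < a < t` vanish and `t` is the last or the last but one index. -/
structure IsFamilyPerm (w : Perm (Fin (N + 1))) (t : Fin (N + 1)) : Prop where
  pos : 0 < t
  eq_last : ∀ x, t < x → x = Fin.last N
  strictMonoOn : StrictMonoOn w (Set.Ioo 0 t)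
  apply_le : w t ≤ w (Fin.last N)

namespace IsFamilyPerm

variable {c x q m : Fin (N + 1)}

theorem lt_of_apply_lt (h : IsFamilyPerm w t) (hq : q ≤ w t) (hc : 0 < c) (hqc : q ≤ w c)
    (hx : w x < q) : x < c := by
  by_contra! hcx
  have hxc : x ≠ c := fun hxc => (hxc ▸ hqc).not_gt hx
  have hcx := lt_of_le_of_ne hcx hxc.symm
  rcases lt_trichotomy x t with hxt | rfl | htx
  · exact (hx.trans_le hqc).not_gt (h.strictMonoOn ⟨hc, hcx.trans hxt⟩ ⟨hc.trans hcx, hxt⟩ hcx)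
  · exact hx.not_ge hq
  · exact hx.not_ge (h.eq_last x htx ▸ hq.trans h.apply_le)

theorem apply_lt_of_lt (h : IsFamilyPerm w t) (hc : 0 < c) (hct : c < w t) : w c < w t := by
  by_contra! hle
  have := val_le_card_of_forall_lt_mem w fun x hx =>
    Finset.mem_Iio.2 (h.lt_of_apply_lt le_rfl hc hle hx)
  rw [Fin.card_Iio] at this
  exact this.not_gt hct

theorem apply_lt_self (h : IsFamilyPerm w t) (h0 : w t < w 0) (hc : 0 < c) (hct : c ≤ w t) :
    w c < c := by
  by_contra! hle
  have := val_le_card_of_forall_lt_mem w fun x hx => Finset.mem_Ioo.2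
    ⟨Fin.pos_of_ne_zero fun hx0 => (hx.trans_le hct).not_gt (hx0 ▸ h0),
      h.lt_of_apply_lt hct hc hle hx⟩
  rw [Fin.card_Ioo] at this
  have : 0 < c.val := hc
  simp only [Fin.val_zero] at *
  omega

theorem sameCycle_of_le (h : IsFamilyPerm w t) (h0 : w t < w 0) :
    ∀ c ≤ w t, w.SameCycle 0 c := by
  intro c
  induction c using WellFoundedLT.induction with
  | ind c ih =>
    intro hct
    rcases eq_or_ne c 0 with rfl | hc
    · exact .refl w 0
    have hlt := h.apply_lt_self h0 (Fin.pos_of_ne_zero hc) hct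
    exact Perm.sameCycle_apply_right.1 (ih _ hlt (hlt.le.trans hct))

theorem sameCycle_zero (h : IsFamilyPerm w t) (h0 : w t < w 0) : w.SameCycle 0 t :=
  Perm.sameCycle_apply_right.1 (h.sameCycle_of_le h0 _ le_rfl)

theorem self_lt_apply (h : IsFamilyPerm w t) (h0 : w t < w 0) (hm : 0 < m) (hmt : m < t)
    (h0m : w 0 < m) : m < w m := by
  by_contra! hle
  have hmaps : Set.MapsTo w (insert t (Finset.Iic m)) (Finset.Iic m) := by
    intro x hx
    simp only [Finset.coe_Iic, Set.mem_insert_iff, Set.mem_Iic] at hx ⊢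
    rcases hx with rfl | hx
    · exact (h0.trans h0m).le
    rcases (Fin.zero_le x).eq_or_lt with rfl | hx0
    · exact h0m.le
    rcases hx.eq_or_lt with rfl | hxm
    · exact hle
    · exact ((h.strictMonoOn ⟨hx0, hxm.trans hmt⟩ ⟨hm, hmt⟩ hxm).trans_le hle).le
  have := Finset.card_le_card_of_injOn w (s := insert t (Finset.Iic m)) (t := Finset.Iic m)
    (by simpa using hmaps) w.injective.injOn
  rw [Finset.card_insert_of_notMem (by simpa using hmt)] at this
  omega

theorem sameCycle_of_lt_apply_zero_lt (h : IsFamilyPerm w t) (h0 : w t < w 0)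
    (hlast : w.SameCycle 0 (Fin.last N)) (hx : w 0 < w x) : w.SameCycle 0 x := by
  classical
  by_contra hx0
  -- the largest element `m` of the cycle of `x` would satisfy `m < w m`
  obtain ⟨m, hm, hmax⟩ := (Finset.univ.filter fun b => w.SameCycle x b).exists_max_image id
    ⟨x, by simpa using Perm.SameCycle.refl w x⟩
  simp only [Finset.mem_filter, Finset.mem_univ, true_and, id_eq] at hm hmax
  have hwx : w x ≤ m := hmax _ (Perm.sameCycle_apply_right.2 (.refl w x))
  have hm0 : m ≠ 0 := fun h0 => hx0 (h0 ▸ hm).symm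
  have hmt : m ≠ t := fun ht => hx0 ((h.sameCycle_zero h0).trans (ht ▸ hm).symm)
  have hmlast : ¬ t < m := fun htm => hx0 (hlast.trans (h.eq_last m htm ▸ hm).symm)
  have hlt := h.self_lt_apply h0 (Fin.pos_of_ne_zero hm0)
    (lt_of_le_of_ne (not_lt.1 hmlast) hmt) (hx.trans_le hwx)
  exact hlt.not_ge (hmax _ (Perm.sameCycle_apply_right.2 hm))

theorem exists_mayPrecede (h : IsFamilyPerm w t) :
    ∃ L, IsCoxeterBlock w L ∧ (∀ x, x ∈ L) ∧
      L.Pairwise (MayPrecede (Fin.last N) 0 t (fun a => a = 0 ∨ w a < w t) fun b => w 0 < w b) := by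
  have hlast : ¬ (Fin.last N = 0 ∨ w (Fin.last N) < w t) := not_or.2
    ⟨(h.pos.trans_le (Fin.le_last t)).ne', h.apply_le.not_gt⟩
  have ht : ¬ (t = 0 ∨ w t < w t) := not_or.2 ⟨h.pos.ne', lt_irrefl _⟩
  rcases lt_or_gt_of_ne (w.injective.ne h.pos.ne) with h0 | h0
  · have hmaps (x : Fin (N + 1)) (hx : x = 0 ∨ w x < w t) : w x = 0 ∨ w (w x) < w t :=
      (eq_or_ne (w x) 0).imp_right fun hwx => h.apply_lt_of_lt (Fin.pos_of_ne_zero hwx)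
        (hx.elim (fun hx => hx ▸ h0) id)
    refine exists_mayPrecede_of_stable hlast (Or.inl rfl) ht fun x =>
      ⟨fun hx => ?_, fun hx => ?_⟩
    · simpa only [symm_apply_apply] using
        Perm.perm_symm_on_of_perm_on_finite (p := fun x => x = 0 ∨ w x < w t) hmaps hx
    · exact hmaps x hx
  · have hmaps (x : Fin (N + 1)) (hx0 : x ≠ 0) (hx : x = 0 ∨ w x < w t) :
        w x = 0 ∨ w (w x) < w t :=
      (eq_or_ne (w x) 0).imp_right fun hwx =>
        h.apply_lt_of_lt (Fin.pos_of_ne_zero hwx) (hx.resolve_left hx0)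
    by_cases hN : w.SameCycle 0 (Fin.last N)
    · exact exists_mayPrecede_of_sameCycle hlast (Or.inl rfl) ht hmaps hN (h.sameCycle_zero h0)
        fun x => h.sameCycle_of_lt_apply_zero_lt h0 hN
    · refine exists_mayPrecede_of_not_sameCycle (Or.inl rfl) ht hmaps ?_ hN
      rintro x (rfl | hx)
      exacts [.refl w 0, Perm.sameCycle_apply_right.1 (h.sameCycle_of_le h0 _ hx.le)]

end IsFamilyPerm

theorem IsCosetMinimal.isPositiveCoxeter_of_family {lam : Fin (N + 1) → ℤ}
    (h : IsCosetMinimal w lam) (htpos : 0 < t) (ht : ∀ x, t < x → x = Fin.last N)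
    (hlam : ∀ a, 0 < a → a < t → lam a = 0) (h0 : -1 ≤ lam 0)
    (hlamt : t ≠ Fin.last N → lam t = 1 ∧ lam (Fin.last N) = 1) : IsPositiveCoxeter w lam := by
  have hw : IsFamilyPerm w t :=
    { pos := htpos
      eq_last := ht
      strictMonoOn := fun a ha b hb hab =>
        h.apply_lt hab ((hlam a ha.1 ha.2).trans (hlam b hb.1 hb.2).symm)
      apply_le := by
        rcases (Fin.le_last t).eq_or_lt with rfl | hlt
        · rfl
        · exact (h.apply_lt hlt ((hlamt hlt.ne).1.trans (hlamt hlt.ne).2.symm)).le }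
  obtain ⟨L, hL, hmem, hpair⟩ := hw.exists_mayPrecede
  refine hL.isPositiveCoxeter hmem (hpair.imp fun {a b} hab => h.ellF_nonneg fun hlt => ?_)
  obtain ⟨hlast, htD, h0S⟩ := hab
  have hb0 : 0 < b := (Fin.zero_le a).trans_lt hlt
  rcases lt_trichotomy b t with hbt | rfl | htb
  · rw [hlam b hb0 hbt]
    rcases (Fin.zero_le a).eq_or_lt with rfl | ha0
    · rw [if_pos (lt_of_le_of_ne (not_lt.1 (h0S rfl)) (w.injective.ne hb0.ne'))]
      omega
    · rw [hlam a ha0 (hlt.trans hbt)]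
      split_ifs <;> decide
  · obtain ⟨ha0, hwa⟩ := not_or.1 fun haD => htD haD rfl
    rw [if_pos (lt_of_le_of_ne (not_lt.1 hwa) (w.injective.ne hlt.ne')), (hlamt hlast).1,
      hlam a (Fin.pos_of_ne_zero ha0) hlt, sub_zero]
  · exact absurd (ht b htb) hlast

end Family

section Sporadic

/-- A terminating search for a proof of `IsPartialCoxeter L w`, for a permutation `w` given as a
function: the first neighbouring pair of `L` can only enter as forced by the value of `w`. -/
def partialCoxeterTest {α : Type*} [DecidableEq α] : List α → (α → α) → Bool
  | a :: b :: L, f =>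
    if f a = a then partialCoxeterTest (b :: L) f
    else if f a = b then partialCoxeterTest (b :: L) fun x => swap a b (f x)
    else if f b = a then partialCoxeterTest (b :: L) fun x => f (swap a b x)
    else false
  | _, _ => true

theorem isPartialCoxeter_of_test {α : Type*} [DecidableEq α] : ∀ {L : List α} {w : Perm α},
    (∀ x ∉ L, w x = x) → partialCoxeterTest L w = true → IsPartialCoxeter L w
  | [], w, hw, _ => by
    obtain rfl : w = 1 := Equiv.ext fun x => hw x List.not_mem_nil
    exact .nil
  | [a], w, hw, _ => by
    have hfix (x) (hx : x ≠ a) : w x = x := hw x (mt List.mem_singleton.1 hx)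
    obtain rfl : w = 1 := Equiv.ext fun x => by
      by_contra hx
      obtain rfl : x = a := of_not_not (mt (hfix x) hx)
      exact hx (w.injective (hfix _ hx))
    exact .cons a .nil
  | a :: b :: L, w, hw, h => by
    have hfix {x} (hxa : x ≠ a) (hx : x ∉ b :: L) : w x = x :=
      hw x (List.not_mem_cons_of_ne_of_not_mem hxa hx)
    rw [partialCoxeterTest] at h
    split_ifs at h with ha hab hba
    · refine .cons a (isPartialCoxeter_of_test (fun x hx => ?_) h)
      rcases eq_or_ne x a with rfl | hxa
      exacts [ha, hfix hxa hx]
    · rw [← swap_mul_self_mul a b w]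
      refine .mulLeft a b (isPartialCoxeter_of_test (fun x hx => ?_) h)
      rw [Perm.mul_apply]
      rcases eq_or_ne x a with rfl | hxa
      · rw [hab, swap_apply_right]
      · rw [hfix hxa hx, swap_apply_of_ne_of_ne hxa (List.ne_of_not_mem_cons hx)]
    · rw [← mul_swap_mul_self a b w]
      refine .mulRight a b (isPartialCoxeter_of_test (fun x hx => ?_) h)
      rw [Perm.mul_apply]
      rcases eq_or_ne x a with rfl | hxa
      · rw [swap_apply_left, hba]
      · rw [swap_apply_of_ne_of_ne hxa (List.ne_of_not_mem_cons hx), hfix hxa hx]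

/-- A decidable certificate that a coset minimal `(w, λ)` is of positive Coxeter type: the list `L`
is `v 0, v 1, …` for a suitable `v`, and `f` is `w` as a function. -/
def IsCertificate {n : ℕ} (lam : Fin n → ℤ) (f : Fin n → Fin n) (L : List (Fin n)) : Prop :=
  L.Nodup ∧ (∀ x, x ∈ L) ∧ partialCoxeterTest L f = true ∧
    L.Pairwise fun a b => a < b → lam b - lam a ≤ if f b < f a then 1 else 0

instance {n : ℕ} (lam : Fin n → ℤ) (f : Fin n → Fin n) :
    DecidablePred (IsCertificate lam f) := fun L => by
  unfold IsCertificate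
  infer_instance

theorem IsCertificate.isPositiveCoxeter {n : ℕ} {w : Perm (Fin n)} {lam : Fin n → ℤ}
    {L : List (Fin n)} (hL : IsCertificate lam w L) (h : IsCosetMinimal w lam) :
    IsPositiveCoxeter w lam := by
  obtain ⟨hn, hmem, htest, hpair⟩ := hL
  have hblock : IsCoxeterBlock w L :=
    ⟨hn, w, isPartialCoxeter_of_test (fun x hx => absurd (hmem x) hx) htest, fun _ _ => rfl⟩
  exact hblock.isPositiveCoxeter hmem (hpair.imp fun hab => h.ellF_nonneg hab)

/-- The vector `(c, 0, …, 0, 1, 1, 1)`. -/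
def sporadicVec {m : ℕ} (c : ℤ) (i : Fin (m + 4)) : ℤ :=
  if i = 0 then c else if (i : ℕ) ≤ m then 0 else 1

/-- The one-line notation that starts with `z`, ends with `p, q, r` and is increasing in between. -/
def sporadicWord {m : ℕ} (z p q r : Fin (m + 4)) : List (Fin (m + 4)) :=
  z :: ((List.finRange (m + 4)).filter (fun x => x ∉ [z, p, q, r]) ++ [p, q, r])

theorem eq_filter_finRange_of_pairwise_lt {n : ℕ} {l : List (Fin n)} {P : Fin n → Prop}
    [DecidablePred P] (h : l.Pairwise (· < ·)) (hl : ∀ x, x ∈ l ↔ P x) :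
    l = (List.finRange n).filter P := by
  have hfilter : ((List.finRange n).filter P).Pairwise (· < ·) :=
    (List.pairwise_lt_finRange n).filter _
  refine List.Perm.eq_of_pairwise (fun a b _ _ hab hba => absurd hab hba.not_gt) h hfilter ?_
  refine (List.perm_ext_iff_of_nodup (h.imp ne_of_lt) (hfilter.imp ne_of_lt)).2 fun x => ?_
  simp [hl]

theorem ofFn_eq_sporadicWord {m : ℕ} {w : Perm (Fin (m + 4))}
    (h : ∀ a b, 0 < a → a < b → b.val ≤ m → w a < w b) :
    List.ofFn w = sporadicWord (w 0) (w ⟨m + 1, by omega⟩) (w ⟨m + 2, by omega⟩)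
      (w ⟨m + 3, by omega⟩) := by
  have hsplit : List.ofFn w = w 0 :: (List.ofFn (fun i : Fin m => w ⟨i + 1, by omega⟩) ++
      [w ⟨m + 1, by omega⟩, w ⟨m + 2, by omega⟩, w ⟨m + 3, by omega⟩]) := by
    rw [List.ofFn_succ, List.ofFn_succ_last, List.ofFn_succ_last, List.ofFn_succ_last]
    simp [Fin.succ, Fin.last]
  have hnodup : (List.ofFn w).Nodup := List.nodup_ofFn.2 w.injective
  have hmem (x) : x ∈ List.ofFn w := List.mem_ofFn.2 (w.surjective x)
  rw [hsplit] at hnodup hmem ⊢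
  rw [sporadicWord, ← eq_filter_finRange_of_pairwise_lt]
  · refine List.pairwise_ofFn.2 fun i j hij => h _ _ (Nat.succ_pos _) ?_ j.is_lt
    exact Nat.succ_lt_succ hij
  · intro x
    have hx := hmem x
    simp only [List.nodup_cons, List.nodup_append, List.mem_append, List.mem_cons] at hnodup hx ⊢
    grind

theorem IsCosetMinimal.isPositiveCoxeter_sporadic {m : ℕ} {w : Perm (Fin (m + 4))} {c : ℤ}
    {Ls : List (List (Fin (m + 4)))} (h : IsCosetMinimal w (sporadicVec c))
    (hLs : ∀ p q r : Fin (m + 4), p < q → q < r → ∀ z ∉ [p, q, r],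
      (c = 0 → ∀ x ∉ [p, q, r], z ≤ x) →
      ∃ L ∈ Ls, IsCertificate (sporadicVec c) (fun i => (sporadicWord z p q r).getD i i) L) :
    IsPositiveCoxeter w (sporadicVec c) := by
  have hone (a : Fin (m + 4)) (ha : m < a.val) : sporadicVec c a = 1 := by
    rw [sporadicVec, if_neg (by rintro rfl; simp at ha), if_neg ha.not_ge]
  have hzero (a : Fin (m + 4)) (ha0 : a ≠ 0) (ha : a.val ≤ m) : sporadicVec c a = 0 := by
    rw [sporadicVec, if_neg ha0, if_pos ha]
  have hmid (a b : Fin (m + 4)) (ha : a ≠ 0) (hab : a < b) (hb : b.val ≤ m) : w a < w b :=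
    h.apply_lt hab <| by
      rw [hzero a ha (le_trans (Fin.val_le_of_le hab.le) hb), hzero b (Fin.ne_zero_of_lt hab) hb]
  have hfirst : c = 0 → ∀ x ∉ [w ⟨m + 1, by omega⟩, w ⟨m + 2, by omega⟩, w ⟨m + 3, by omega⟩],
      w 0 ≤ x := by
    rintro rfl x hx
    obtain ⟨i, rfl⟩ := w.surjective x
    simp only [List.mem_cons, List.not_mem_nil, or_false, EmbeddingLike.apply_eq_iff_eq,
      Fin.ext_iff] at hx
    rcases eq_or_ne i 0 with rfl | hi
    · exact le_rfl
    · refine (h.apply_lt (Fin.pos_of_ne_zero hi) ?_).le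
      rw [hzero i hi (by omega), sporadicVec, if_pos rfl]
  obtain ⟨L, -, hL⟩ := hLs _ _ _
    (h.apply_lt (a := ⟨m + 1, by omega⟩) (b := ⟨m + 2, by omega⟩) (by simp) (by simp [hone]))
    (h.apply_lt (b := ⟨m + 3, by omega⟩) (by simp) (by simp [hone])) (w 0)
    (by simp [Fin.ext_iff]) hfirst
  rw [← ofFn_eq_sporadicWord fun a b ha => hmid a b ha.ne'] at hL
  have hw : (fun i : Fin (m + 4) => (List.ofFn w).getD i i) = w := by
    funext i
    rw [List.getD_eq_getElem _ _ (by rw [List.length_ofFn]; exact i.is_lt), List.getElem_ofFn]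
  exact (hw ▸ hL).isPositiveCoxeter h

theorem IsCosetMinimal.isPositiveCoxeter_sporadicVec {m : ℕ} {w : Perm (Fin (m + 4))} {c : ℤ}
    (h : IsCosetMinimal w (sporadicVec c)) (hc : c = -1 ∨ c = 0) (hm : 2 + 2 * c ≤ m)
    (hm' : m < 5 + 3 * c) : IsPositiveCoxeter w (sporadicVec c) := by
  have hcases : (c = -1 ∧ (m = 0 ∨ m = 1)) ∨ (c = 0 ∧ (m = 2 ∨ m = 3 ∨ m = 4)) := by omega
  rcases hcases with ⟨rfl, rfl | rfl⟩ | ⟨rfl, rfl | rfl | rfl⟩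
  · exact h.isPositiveCoxeter_sporadic (Ls := [[3, 2, 1, 0]]) (by decide +kernel)
  · exact h.isPositiveCoxeter_sporadic
      (Ls := [[4, 3, 1, 2, 0], [4, 3, 2, 0, 1], [1, 3, 4, 2, 0], [2, 3, 4, 1, 0]])
      (by decide +kernel)
  · exact h.isPositiveCoxeter_sporadic
      (Ls := [[5, 2, 4, 1, 3, 0], [5, 4, 3, 2, 1, 0], [1, 4, 2, 5, 0, 3]]) (by decide +kernel)
  · exact h.isPositiveCoxeter_sporadic
      (Ls := [[6, 3, 5, 2, 4, 1, 0], [6, 5, 4, 3, 2, 1, 0], [6, 3, 1, 5, 2, 0, 4],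
        [2, 5, 6, 3, 1, 4, 0]]) (by decide +kernel)
  · exact h.isPositiveCoxeter_sporadic
      (Ls := [[7, 4, 6, 3, 5, 2, 1, 0], [7, 4, 2, 6, 3, 1, 5, 0], [7, 6, 5, 4, 3, 2, 1, 0],
        [3, 6, 7, 4, 2, 5, 1, 0], [7, 4, 2, 0, 5, 3, 1, 6], [1, 4, 6, 3, 7, 0, 2, 5]])
      (by decide +kernel)

end Sporadic

section PartialSums

variable {n : ℕ} {lam : Fin n → ℤ}

theorem psum_zero (lam : Fin n → ℤ) : psum lam 0 = 0 := by
  simp [psum]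

theorem psum_self (lam : Fin n → ℤ) : psum lam n = ∑ a, lam a := by
  simp [psum]

theorem psum_succ (lam : Fin n → ℤ) {k : ℕ} (hk : k < n) :
    psum lam (k + 1) = psum lam k + lam ⟨k, hk⟩ := by
  have hfilter : Finset.univ.filter (fun i : Fin n => i.val < k + 1) =
      insert ⟨k, hk⟩ (Finset.univ.filter fun i : Fin n => i.val < k) := by
    ext i
    simp only [Finset.mem_filter, Finset.mem_univ, true_and, Finset.mem_insert, Fin.ext_iff]
    omega
  rw [psum, hfilter, Finset.sum_insert (by simp), add_comm, psum]

theorem psum_const (c : ℤ) {k : ℕ} (hk : k ≤ n) : psum (fun _ : Fin n => c) k = k * c := by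
  induction k with
  | zero => simp [psum_zero]
  | succ k ih =>
    rw [psum_succ _ hk, ih (Nat.le_of_succ_le hk)]
    push_cast
    ring

theorem psum_sub (lam ν : Fin n → ℤ) (k : ℕ) :
    psum (fun a => lam a - ν a) k = psum lam k - psum ν k :=
  Finset.sum_sub_distrib _ _

theorem psum_comp_rev (lam : Fin n → ℤ) {k : ℕ} (hk : k ≤ n) :
    psum (lam ∘ Fin.rev) k = psum lam n - psum lam (n - k) := by
  induction k with
  | zero => simp [psum_zero]
  | succ k ih =>
    have hsucc := psum_succ lam (k := n - (k + 1)) (by omega)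
    rw [show n - (k + 1) + 1 = n - k by omega] at hsucc
    have hrev : Fin.rev (⟨k, hk⟩ : Fin n) = ⟨n - (k + 1), by omega⟩ := Fin.ext (Fin.val_rev _)
    rw [psum_succ _ hk, ih (Nat.le_of_succ_le hk), Function.comp_apply, hrev]
    omega

theorem apply_zero_nonpos_of_two_mul_psum_le {n : ℕ} {lam : Fin (n + 1) → ℤ} (hlam : Monotone lam)
    (hS : 2 * psum lam (n + 1) ≤ (n + 1 : ℕ)) : lam 0 ≤ 0 := by
  have hsum : (n + 1) • lam 0 ≤ ∑ a, lam a := by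
    simpa using Finset.card_nsmul_le_sum Finset.univ lam (lam 0) fun a _ => hlam (Fin.zero_le a)
  rw [← psum_self, nsmul_eq_mul] at hsum
  push_cast at hS hsum
  by_contra! hlt
  nlinarith

/-- The condition `depth (lam ∘ Fin.rev) < 2` on a weakly increasing vector, with denominators
cleared. -/
def HasSmallDepth (lam : Fin n → ℤ) : Prop :=
  ∀ k ≤ n, k * psum lam n < 2 * n + n * psum lam k

theorem hasSmallDepth_of_depth_lt (hn : 2 ≤ n) (h : depth (lam ∘ Fin.rev) < 2) :
    HasSmallDepth lam := by
  intro k hk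
  have hne : (Finset.Icc 1 (n - 1)).Nonempty := Finset.nonempty_Icc.2 (by omega)
  rw [depth, dif_pos hne, Finset.sup'_lt_iff] at h
  rcases Nat.eq_zero_or_pos k with rfl | hk0
  · rw [psum_zero]
    omega
  rcases hk.eq_or_lt with rfl | hkn
  · omega
  have hj := h (n - k) (Finset.mem_Icc.2 (by omega))
  have hn0 : (0 : ℚ) < n := by positivity
  rw [psum_comp_rev _ (Nat.sub_le n k), psum_comp_rev _ le_rfl, Nat.sub_sub_self hk, Nat.sub_self,
    psum_zero, Nat.cast_sub hk, sub_zero, div_mul_eq_mul_div, sub_lt_iff_lt_add,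
    ← sub_lt_iff_lt_add', lt_div_iff₀ hn0] at hj
  have hcast : ((k * psum lam n : ℤ) : ℚ) < (2 * n + n * psum lam k : ℤ) := by
    push_cast at hj ⊢
    linarith
  exact_mod_cast hcast

namespace HasSmallDepth

theorem sub_const (h : HasSmallDepth lam) (c : ℤ) : HasSmallDepth fun a => lam a - c := by
  intro k hk
  have := h k hk
  rw [psum_sub, psum_sub, psum_const c le_rfl, psum_const c hk]
  linarith

theorem const_sub_comp_rev (h : HasSmallDepth lam) (c : ℤ) :
    HasSmallDepth fun a => c - (lam ∘ Fin.rev) a := by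
  intro k hk
  have := h (n - k) (Nat.sub_le n k)
  rw [psum_sub, psum_sub, psum_const c le_rfl, psum_const c hk, psum_comp_rev _ le_rfl,
    psum_comp_rev _ hk, Nat.sub_self, psum_zero]
  push_cast [hk] at this
  linarith

variable (h : HasSmallDepth lam)
include h

theorem neg_one_le (hS : 0 ≤ psum lam n) (h0 : 0 < n) : -1 ≤ lam ⟨0, h0⟩ := by
  have h1 := h 1 h0
  rw [psum_succ _ h0, psum_zero] at h1
  push_cast at h1
  by_contra! hlt
  nlinarith

theorem nonneg (hlam : Monotone lam) (hS : 0 ≤ psum lam n) {a : Fin n} (ha : 0 < a.val) :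
    0 ≤ lam a := by
  have hn : 1 < n := by omega
  have h2 := h 2 hn
  rw [psum_succ _ hn, psum_succ _ (Nat.zero_lt_of_lt hn), psum_zero] at h2
  have h01 : lam ⟨0, Nat.zero_lt_of_lt hn⟩ ≤ lam ⟨1, hn⟩ := hlam (Nat.zero_le 1)
  refine le_trans ?_ (hlam (show ⟨1, hn⟩ ≤ a from ha))
  push_cast at h2
  by_contra! hlt
  nlinarith

variable (hS : 2 * psum lam n ≤ n)
include hS

theorem two_mul_sub_psum_lt {k : ℕ} (hk : k ≤ n) : 2 * (psum lam n - psum lam k) < 4 + (n - k) := by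
  have hk' := h k hk
  by_contra! hle
  nlinarith

variable (hlam : Monotone lam)
include hlam

theorem nonpos_of_add_four_le {a : Fin n} (ha : a.val + 4 ≤ n) : lam a ≤ 0 := by
  obtain ⟨k, rfl⟩ : ∃ k, n = k + 4 := ⟨n - 4, by omega⟩
  have htail := h.two_mul_sub_psum_lt hS (k := k) (by omega)
  rw [psum_succ _ (k := k + 3) (by omega), psum_succ _ (k := k + 2) (by omega),
    psum_succ _ (k := k + 1) (by omega), psum_succ _ (k := k) (by omega)] at htail
  have hle (i : ℕ) (hi : i < 4) : lam a ≤ lam ⟨k + i, by omega⟩ :=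
    hlam (Fin.le_def.2 (by simp only; omega))
  have h0 := hle 0 (by omega)
  have h1 := hle 1 (by omega)
  have h2 := hle 2 (by omega)
  have h3 := hle 3 (by omega)
  push_cast at htail
  simp only [add_zero] at h0
  omega

theorem eq_one {a b : Fin n} (ha : a.val + 2 ≤ n) (hpos : 0 < lam a) (hab : a ≤ b) :
    lam b = 1 := by
  obtain ⟨k, rfl⟩ : ∃ k, n = k + 2 := ⟨n - 2, by omega⟩
  have htail := h.two_mul_sub_psum_lt hS (k := k) (by omega)
  rw [psum_succ _ (k := k + 1) (by omega), psum_succ _ (k := k) (by omega)] at htail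
  have ha' : lam a ≤ lam ⟨k, by omega⟩ := hlam (Fin.le_def.2 (by simp only; omega))
  have hb : lam b ≤ lam ⟨k + 1, by omega⟩ := hlam (Fin.le_def.2 (by simp only; omega))
  have hab' := hlam hab
  push_cast at htail
  omega

end HasSmallDepth

theorem HasSmallDepth.eq_sporadicVec {m : ℕ} {lam : Fin (m + 4) → ℤ} (h : HasSmallDepth lam)
    (hS0 : 0 ≤ psum lam (m + 4)) (hS : 2 * psum lam (m + 4) ≤ (m + 4 : ℕ)) (hlam : Monotone lam)
    (hpos : 0 < lam ⟨m + 1, by omega⟩) : lam = sporadicVec (lam 0) := by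
  funext a
  rw [sporadicVec]
  split_ifs with ha0 ha
  · rw [ha0]
  · exact le_antisymm (h.nonpos_of_add_four_le hS hlam (by omega))
      (h.nonneg hlam hS0 (Fin.pos_of_ne_zero ha0))
  · exact h.eq_one hS hlam (a := ⟨m + 1, _⟩) (by simp only; omega) hpos
      (Fin.le_def.2 (by simp only; omega))

theorem psum_sporadicVec {m : ℕ} (c : ℤ) {k : ℕ} (hk : k ≤ m) :
    psum (sporadicVec c : Fin (m + 4) → ℤ) (k + 1) = c := by
  induction k with
  | zero => simp [psum_succ, psum_zero, sporadicVec]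
  | succ k ih =>
    rw [psum_succ _ (by omega), ih (Nat.le_of_succ_le hk), sporadicVec,
      if_neg (by simp [Fin.ext_iff]), if_pos hk, add_zero]

theorem psum_sporadicVec_self {m : ℕ} (c : ℤ) :
    psum (sporadicVec c : Fin (m + 4) → ℤ) (m + 4) = c + 3 := by
  rw [psum_succ _ (k := m + 3) (by omega), psum_succ _ (k := m + 2) (by omega),
    psum_succ _ (k := m + 1) (by omega), psum_sporadicVec c le_rfl]
  simp only [sporadicVec, Fin.ext_iff, Fin.val_zero]
  rw [if_neg (by omega), if_neg (by omega), if_neg (by omega), if_neg (by omega),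
    if_neg (by omega), if_neg (by omega)]
  ring

end PartialSums

section Reduction

variable {n : ℕ} {w : Perm (Fin n)} {lam : Fin n → ℤ}

theorem ellF_sub_const (c : ℤ) : ellF w (fun a => lam a - c) = ellF w lam := by
  funext a b
  simp only [ellF, sub_sub_sub_cancel_right]

theorem ellF_dual (c : ℤ) (a b : Fin n) :
    ellF (MulAut.conj Fin.revPerm w) (fun a => c - (lam ∘ Fin.rev) a) a b =
      ellF w lam b.rev a.rev := by
  simp only [ellF, MulAut.conj_apply, Perm.inv_def, Fin.revPerm_symm, Perm.mul_apply,
    Fin.revPerm_apply, Fin.rev_lt_rev, Function.comp_apply]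
  ring

theorem conj_revPerm_simpleT {i : ℕ} (hi : i + 1 < n) :
    MulAut.conj Fin.revPerm (simpleT n i) = simpleT n (n - 2 - i) := by
  rw [simpleT, simpleT, dif_pos hi, dif_pos (by omega), MulAut.conj_apply,
    ← swap_apply_apply, swap_comm]
  congr 1 <;> (ext; simp; omega)

theorem IsPositiveCoxeter.of_dual {c : ℤ}
    (h : IsPositiveCoxeter (MulAut.conj Fin.revPerm w) fun a => c - (lam ∘ Fin.rev) a) :
    IsPositiveCoxeter w lam := by
  obtain ⟨v, hv, l, hnodup, hl, hprod⟩ := h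
  have hinv : MulAut.conj Fin.revPerm (MulAut.conj Fin.revPerm w) = w := by
    ext
    simp [MulAut.conj_apply, Perm.inv_def]
  refine ⟨MulAut.conj Fin.revPerm v, fun a b hab => ?_, l.map fun i => n - 2 - i,
    hnodup.map_on fun i hi j hj hij => ?_, fun i hi => ?_, ?_⟩
  · have hrev := hv b.rev a.rev (Fin.rev_lt_rev.2 hab)
    rwa [ellF_dual] at hrev
  · have := hl i hi
    have := hl j hj
    omega
  · obtain ⟨j, hj, rfl⟩ := List.mem_map.1 hi
    have := hl j hj
    omega
  · rw [← hinv, ← map_inv, ← map_mul, ← map_mul, hprod, map_list_prod, List.map_map, List.map_map]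
    exact congrArg List.prod (List.map_congr_left fun i hi => conj_revPerm_simpleT (hl i hi))

namespace IsCosetMinimal

theorem sub_const (h : IsCosetMinimal w lam) (c : ℤ) : IsCosetMinimal w fun a => lam a - c := by
  rwa [IsCosetMinimal, ellF_sub_const]

theorem dual (h : IsCosetMinimal w lam) (c : ℤ) :
    IsCosetMinimal (MulAut.conj Fin.revPerm w) fun a => c - (lam ∘ Fin.rev) a := fun a b hab => by
  rw [ellF_dual]
  exact h _ _ (Fin.rev_lt_rev.2 hab)

theorem isPositiveCoxeter_of_pos {m : ℕ} {w : Perm (Fin (m + 4))}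
    {lam : Fin (m + 4) → ℤ} (h : IsCosetMinimal w lam) (hd : HasSmallDepth lam)
    (hS0 : 0 ≤ psum lam (m + 4)) (hS : 2 * psum lam (m + 4) ≤ (m + 4 : ℕ))
    (hpos : 0 < lam ⟨m + 1, by omega⟩) : IsPositiveCoxeter w lam := by
  have h0 : -1 ≤ lam 0 := hd.neg_one_le hS0 (Nat.succ_pos _)
  have h0' : lam 0 ≤ 0 := hd.nonpos_of_add_four_le hS h.monotone (Nat.le_add_left 4 m)
  have hvec := hd.eq_sporadicVec hS0 hS h.monotone hpos
  generalize lam 0 = c at hvec h0 h0'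
  subst hvec
  have hm := hd (m + 1) (by omega)
  rw [psum_sporadicVec_self] at hS hm
  rw [psum_sporadicVec c le_rfl] at hm
  push_cast at hS hm
  exact h.isPositiveCoxeter_sporadicVec (by omega) (by omega) (by linarith)

theorem isPositiveCoxeter_of_two_mul_le (h : IsCosetMinimal w lam) (hn : 2 ≤ n)
    (hd : HasSmallDepth lam) (hS0 : 0 ≤ psum lam n) (hS : 2 * psum lam n ≤ n) :
    IsPositiveCoxeter w lam := by
  obtain ⟨k, rfl⟩ : ∃ k, n = k + 2 := ⟨n - 2, by omega⟩
  have h0 : -1 ≤ lam 0 := hd.neg_one_le hS0 (Nat.succ_pos _)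
  have h0' : lam 0 ≤ 0 := apply_zero_nonpos_of_two_mul_psum_le h.monotone hS
  have hzero {b : Fin (k + 2)} (hb : lam b ≤ 0) (a) (ha0 : 0 < a) (hab : a ≤ b) : lam a = 0 :=
    le_antisymm ((h.monotone hab).trans hb) (hd.nonneg h.monotone hS0 ha0)
  rcases le_or_gt (lam ⟨k, by omega⟩) 0 with hk | hk
  · exact h.isPositiveCoxeter_of_family (t := Fin.last (k + 1)) (Fin.last_pos)
      (fun x hx => absurd (Fin.le_last x) hx.not_ge)
      (fun a ha0 hat => hzero hk a ha0 (Nat.le_of_lt_succ hat)) h0 (absurd rfl)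
  obtain ⟨k, rfl⟩ : ∃ j, k = j + 1 := Nat.exists_eq_succ_of_ne_zero <| by
    rintro rfl
    exact hk.not_ge h0'
  rcases le_or_gt (lam ⟨k, by omega⟩) 0 with hk' | hk'
  · exact h.isPositiveCoxeter_of_family (t := ⟨k + 1, by omega⟩) (Nat.succ_pos k)
      (fun x hx => Fin.ext (le_antisymm (Fin.le_last x) hx))
      (fun a ha0 hat => hzero hk' a ha0 (Nat.le_of_lt_succ hat)) h0
      fun _ => ⟨hd.eq_one hS h.monotone le_rfl hk le_rfl,
        hd.eq_one hS h.monotone le_rfl hk (Fin.le_last _)⟩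
  obtain ⟨m, rfl⟩ : ∃ m, k = m + 1 := Nat.exists_eq_succ_of_ne_zero <| by
    rintro rfl
    exact hk'.not_ge h0'
  exact h.isPositiveCoxeter_of_pos hd hS0 hS hk'

theorem isPositiveCoxeter_of_hasSmallDepth (h : IsCosetMinimal w lam) (hn : 2 ≤ n)
    (hd : HasSmallDepth lam) : IsPositiveCoxeter w lam := by
  have hn0 : (0 : ℤ) < n := by omega
  wlog hS0 : 0 ≤ psum lam n ∧ psum lam n < n generalizing lam
  · have hshift := this (h.sub_const (psum lam n / n)) (hd.sub_const _) (by
      rw [psum_sub, psum_const _ le_rfl, ← Int.emod_def]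
      exact ⟨Int.emod_nonneg _ hn0.ne', Int.emod_lt_of_pos _ hn0⟩)
    rwa [IsPositiveCoxeter, ellF_sub_const] at hshift
  rcases le_or_gt (2 * psum lam n) n with hS | hS
  · exact h.isPositiveCoxeter_of_two_mul_le hn hd hS0.1 hS
  · have hdual : psum (fun a => 1 - (lam ∘ Fin.rev) a) n = n - psum lam n := by
      rw [psum_sub, psum_const _ le_rfl, psum_comp_rev _ le_rfl, Nat.sub_self, psum_zero]
      ring
    exact ((h.dual 1).isPositiveCoxeter_of_two_mul_le hn (hd.const_sub_comp_rev 1)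
      (by omega) (by omega)).of_dual

end IsCosetMinimal

end Reduction

theorem depth_comp_rev_le_of_permissible {n : ℕ} {μ lam : Fin n → ℤ} {w : Perm (Fin n)}
    (h : Permissible μ w lam) (hlam : Monotone lam) : depth (lam ∘ Fin.rev) ≤ depth μ := by
  obtain ⟨hsum, hperm⟩ := h
  have hfull : psum (lam ∘ Fin.rev) n = psum μ n := by
    rw [psum_self, psum_self, ← hsum]
    exact Equiv.sum_comp Fin.revPerm lam
  by_cases hne : (Finset.Icc 1 (n - 1)).Nonempty
  · have hn : 0 < n := by
      rw [Finset.nonempty_Icc] at hne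
      omega
    have hmuI (a) : (lam ∘ Fin.rev) a = muI w lam n (Fin.revPerm a) := by
      simp [muI, hn]
    rw [depth, depth, dif_pos hne, dif_pos hne, hfull]
    refine Finset.sup'_mono_fun fun j _ => sub_le_sub_right ?_ _
    exact_mod_cast hperm n hn le_rfl _ Fin.revPerm hmuI (hlam.comp_antitone Fin.rev_anti) j
  · rw [depth, depth, dif_neg hne, dif_neg hne]

theorem stmt10_general (n : ℕ) (hn : 2 ≤ n) (w : Perm (Fin n)) (lam : Fin n → ℤ)
    (hdepth : depth (lam ∘ Fin.rev) < 2) (hmin : IsCosetMinimal w lam) :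
    IsPositiveCoxeter w lam :=
  hmin.isPositiveCoxeter_of_hasSmallDepth hn (hasSmallDepth_of_depth_lt hn hdepth)

theorem stmt10 (n : ℕ) (hn : 2 ≤ n) (μ : Fin n → ℤ) (hμ : Antitone μ)
    (hdepth : depth μ < 2)
    (w : Equiv.Perm (Fin n)) (lam : Fin n → ℤ)
    (hperm : Permissible μ w lam)
    (hmin : ∀ a b : Fin n, a < b → ellF w lam a b ≤ 0) :
    ∃ v : Equiv.Perm (Fin n),
      (∀ a b : Fin n, a < b → 0 ≤ ellF w lam (v a) (v b)) ∧
      ∃ l : List ℕ, l.Nodup ∧ (∀ i ∈ l, i + 1 < n) ∧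
        v⁻¹ * w * v = (l.map (simpleT n)).prod := by
  have hmono : Monotone lam := IsCosetMinimal.monotone hmin
  exact stmt10_general n hn w lam
    ((depth_comp_rev_le_of_permissible hperm hmono).trans_lt hdepth) hmin
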